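/- (Proposition 3.2, Fourier-space form.) Let ν ∈ (0,1/2], α ∈ (0,2], λ > 0, c > 0, t0 > 0 and β ∈ ℝ with λ² ≠ c²|β|^α. Let w = √(λ² - c²|β|^α) ∈ ℂ (principal branch), r₁ = -λ + w, r₂ = -λ - w, and define u* : [t0,∞) → ℂ by u*(t) = ½ (1 + λ/w) E_{ν,1}(r₁ (log(t/t0))^ν) + ½ (1 - λ/w) E_{ν,1}(r₂ (log(t/t0))^ν). Then u*(t0) = 1 and, for every t > t0, (D^ν (D^ν u*))(t) + 2λ (D^ν u*)(t) = -c²|β|^α u*(t), where D^ν is the Caputo-type Hadamard fractional derivative of order ν with base point t0. (That is, u* is the Fourier transform at frequency β of the fundamental solution of the space-time fractional telegraph equation with Hadamard time derivatives and Riesz space derivative of order α.) -/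

import Mathlib

open MeasureTheory intervalIntegral

/-- The two-parameter Mittag-Leffler function `E_{γ,μ}(z) = ∑ z^k / Γ(γ k + μ)`. -/
noncomputable def mittagLeffler (γ μ : ℝ) (z : ℂ) : ℂ :=
  ∑' k : ℕ, z ^ k / (Real.Gamma (γ * k + μ) : ℂ)

/-- The Caputo-type Hadamard fractional derivative of order `ν ∈ (0,1)` with base
point `t0 > 0`, applied componentwise to a complex-valued function. -/
noncomputable def hadamardCaputoC (ν t0 : ℝ) (u : ℝ → ℂ) (t : ℝ) : ℂ :=
  (1 / (Real.Gamma (1 - ν) : ℂ)) *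
    ∫ τ in t0..t, (((Real.log (t / τ)) ^ (-ν) : ℝ) : ℂ) * ((τ : ℂ) * deriv u τ) / (τ : ℂ)

/-!
On `(t0, ∞)` the function `t ↦ E_{ν,1}(r log^ν(t/t0))` is an eigenfunction of the Hadamard–Caputo
derivative with eigenvalue `r`. Indeed, the substitution `s = log(τ/t0)` turns that derivative into
the ordinary Caputo derivative; termwise `d/ds E_{ν,1}(r s^ν) = r s^{ν-1} E_{ν,ν}(r s^ν)`, and the
Euler beta integral, again applied termwise, convolves this with `s^{-ν}/Γ(1-ν)` to give back
`r E_{ν,1}(r s^ν)`. The telegraph equation thus becomes the quadratic equation `r² + 2λr = -c²|β|^α`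
for the eigenvalue, whose roots are `r₁` and `r₂`.
-/

open Set Filter

section Gamma

/- Log-convexity of `Γ` at `x - 1 < x < x + a`, together with `Γ x = (x - 1) Γ (x - 1)`. -/
lemma Gamma_mul_rpow_le_Gamma_add {x a : ℝ} (hx : 1 < x) (ha : 0 < a) :
    Real.Gamma x * (x - 1) ^ a ≤ Real.Gamma (x + a) := by
  have hx₁ : 0 < x - 1 := by linarith
  have hΓ₁ : 0 < Real.Gamma (x - 1) := Real.Gamma_pos_of_pos hx₁
  have hΓ : 0 < Real.Gamma x := Real.Gamma_pos_of_pos (by linarith)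
  have hΓa : 0 < Real.Gamma (x + a) := Real.Gamma_pos_of_pos (by linarith)
  have log_Gamma_eq : Real.log (Real.Gamma x) =
      Real.log (x - 1) + Real.log (Real.Gamma (x - 1)) := by
    rw [← Real.log_mul hx₁.ne' hΓ₁.ne', ← Real.Gamma_add_one hx₁.ne', sub_add_cancel]
  have slope_le := Real.convexOn_log_Gamma.slope_mono_adjacent (mem_Ioi.2 hx₁)
    (mem_Ioi.2 (by linarith : 0 < x + a)) (sub_one_lt x) (lt_add_of_pos_right x ha)
  simp only [Function.comp_apply, sub_sub_cancel, add_sub_cancel_left, div_one] at slope_le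
  rw [le_div_iff₀ ha] at slope_le
  rw [← Real.log_le_log_iff (by positivity) hΓa, Real.log_mul hΓ.ne' (by positivity),
    Real.log_rpow hx₁]
  linear_combination slope_le - a * log_Gamma_eq

end Gamma

section Beta

variable {p q L : ℝ}

lemma integral_rpow_mul_sub_rpow (hp : 0 < p) (hq : 0 < q) (hL : 0 < L) :
    ∫ s in 0..L, s ^ (p - 1) * (L - s) ^ (q - 1) =
      L ^ (p + q - 1) * (Real.Gamma p * Real.Gamma q / Real.Gamma (p + q)) := by
  have beta := Complex.betaIntegral_scaled p q hL
  rw [Complex.betaIntegral_eq_Gamma_mul_div p q (by simpa) (by simpa)] at beta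
  apply Complex.ofReal_injective
  rw [← intervalIntegral.integral_ofReal]
  calc ∫ s in 0..L, ((s ^ (p - 1) * (L - s) ^ (q - 1) : ℝ) : ℂ)
      = ∫ s in 0..L, (s : ℂ) ^ ((p : ℂ) - 1) * ((L : ℂ) - s) ^ ((q : ℂ) - 1) := by
        refine integral_congr_Ioo_of_le hL.le fun s hs => ?_
        simp [Complex.ofReal_cpow hs.1.le, Complex.ofReal_cpow (sub_nonneg.2 hs.2.le)]
    _ = _ := by
        rw [beta]
        simp [Complex.ofReal_cpow hL.le, ← Complex.Gamma_ofReal]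

lemma intervalIntegrable_ofReal_rpow_mul_sub_rpow (hp : 0 < p) (hq : 0 < q) (hL : 0 < L) :
    IntervalIntegrable (fun s : ℝ => ((s ^ (p - 1) * (L - s) ^ (q - 1) : ℝ) : ℂ)) volume 0 L := by
  refine intervalIntegrable_of_integral_ne_zero ?_
  rw [intervalIntegral.integral_ofReal, integral_rpow_mul_sub_rpow hp hq hL]
  have := Real.Gamma_pos_of_pos hp
  have := Real.Gamma_pos_of_pos hq
  have := Real.Gamma_pos_of_pos (add_pos hp hq)
  exact Complex.ofReal_ne_zero.2 (by positivity)

end Beta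

section MittagLeffler

variable {γ μ : ℝ}

lemma summable_pow_div_Gamma (hγ : 0 < γ) (μ : ℝ) (z : ℂ) :
    Summable fun k : ℕ => z ^ k / (Real.Gamma (γ * k + μ) : ℂ) := by
  have arg_tendsto : Tendsto (fun k : ℕ => γ * k + (μ - 1)) atTop atTop :=
    tendsto_atTop_add_const_right _ _ (tendsto_natCast_atTop_atTop.const_mul_atTop hγ)
  refine summable_of_ratio_norm_eventually_le one_half_lt_one ?_
  filter_upwards [arg_tendsto.eventually_gt_atTop 0,
    ((tendsto_rpow_atTop hγ).comp arg_tendsto).eventually_ge_atTop (2 * ‖z‖)] with k hk hz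
  have Gamma_growth := Gamma_mul_rpow_le_Gamma_add (by linarith : 1 < γ * k + μ) hγ
  have hΓ : 0 < Real.Gamma (γ * k + μ) := Real.Gamma_pos_of_pos (by linarith)
  have hΓ' : 0 < Real.Gamma (γ * k + μ + γ) := Real.Gamma_pos_of_pos (by linarith)
  have two_norm_mul_Gamma_le :
      2 * ‖z‖ * Real.Gamma (γ * k + μ) ≤ Real.Gamma (γ * k + μ + γ) :=
    calc 2 * ‖z‖ * Real.Gamma (γ * k + μ)
        ≤ (γ * k + (μ - 1)) ^ γ * Real.Gamma (γ * k + μ) := by gcongr; exact hz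
      _ ≤ Real.Gamma (γ * k + μ + γ) := by rwa [mul_comm, ← add_sub_assoc]
  rw [show γ * (k + 1 : ℕ) + μ = γ * k + μ + γ by push_cast; ring]
  simp only [norm_div, norm_pow, Complex.norm_real, Real.norm_of_nonneg hΓ.le,
    Real.norm_of_nonneg hΓ'.le]
  rw [div_le_iff₀ hΓ', pow_succ]
  calc ‖z‖ ^ k * ‖z‖
      = 1 / 2 * (‖z‖ ^ k / Real.Gamma (γ * k + μ)) * (2 * ‖z‖ * Real.Gamma (γ * k + μ)) := by
        field_simp
    _ ≤ _ := by gcongr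

lemma mittagLeffler_one_zero (γ : ℝ) : mittagLeffler γ 1 0 = 1 := by
  rw [mittagLeffler, tsum_eq_single 0 fun k hk => by simp [hk]]
  simp

lemma norm_pow_div_Gamma_le {z : ℂ} {ρ : ℝ} (hz : ‖z‖ ≤ ρ) (γ μ : ℝ) (k : ℕ) :
    ‖z ^ k / (Real.Gamma (γ * k + μ) : ℂ)‖ ≤ ‖(ρ : ℂ) ^ k / (Real.Gamma (γ * k + μ) : ℂ)‖ := by
  simp only [norm_div, norm_pow, Complex.norm_real]
  gcongr
  exact hz.trans (Real.le_norm_self ρ)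

lemma differentiable_mittagLeffler (hγ : 0 < γ) (μ : ℝ) : Differentiable ℂ (mittagLeffler γ μ) := by
  intro z
  refine (Complex.differentiableOn_tsum_of_summable_norm
    (summable_pow_div_Gamma hγ μ (‖z‖ + 1 : ℝ)).norm (fun k => by fun_prop)
    (Metric.isOpen_ball (x := 0) (ε := ‖z‖ + 1)) fun k w hw =>
      norm_pow_div_Gamma_le (mem_ball_zero_iff.1 hw).le γ μ k).differentiableAt
    (Metric.isOpen_ball.mem_nhds (by simp))

lemma deriv_mittagLeffler (hγ : 0 < γ) (μ : ℝ) (z : ℂ) :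
    deriv (mittagLeffler γ μ) z =
      ∑' k : ℕ, (k + 1) * z ^ k / (Real.Gamma (γ * (k + 1) + μ) : ℂ) := by
  have termwise := Complex.hasSum_deriv_of_summable_norm
    (summable_pow_div_Gamma hγ μ (‖z‖ + 1 : ℝ)).norm (fun k => by fun_prop)
    (Metric.isOpen_ball (x := 0) (ε := ‖z‖ + 1))
    (fun k w hw => norm_pow_div_Gamma_le (mem_ball_zero_iff.1 hw).le γ μ k)
    (z := z) (by simp)
  rw [← hasSum_nat_add_iff' 1] at termwise
  change deriv (fun w => ∑' k : ℕ, w ^ k / (Real.Gamma (γ * k + μ) : ℂ)) z = _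
  simpa using termwise.tsum_eq.symm

lemma hasDerivAt_mittagLeffler_one (hγ : 0 < γ) (z : ℂ) :
    HasDerivAt (mittagLeffler γ 1) (mittagLeffler γ γ z / γ) z := by
  refine (differentiable_mittagLeffler hγ 1 z).hasDerivAt.congr_deriv ?_
  rw [deriv_mittagLeffler hγ, mittagLeffler, ← tsum_div_const]
  refine tsum_congr fun k => ?_
  have harg : 0 < γ * (k + 1) := by positivity
  have hΓ : (Real.Gamma (γ * (k + 1)) : ℂ) ≠ 0 := by exact_mod_cast (Real.Gamma_pos_of_pos harg).ne'
  have hγ' : (γ : ℂ) ≠ 0 := by exact_mod_cast hγ.ne'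
  have hk : (k + 1 : ℂ) ≠ 0 := by exact_mod_cast k.succ_ne_zero
  rw [Real.Gamma_add_one harg.ne', show γ * k + γ = γ * (k + 1) by ring]
  push_cast
  field_simp

lemma hasDerivAt_mittagLeffler_one_mul_rpow (hγ : 0 < γ) (r : ℂ) {s : ℝ} (hs : 0 < s) :
    HasDerivAt (fun s : ℝ => mittagLeffler γ 1 (r * (s ^ γ : ℝ)))
      (r * ((s ^ (γ - 1) : ℝ) * mittagLeffler γ γ (r * (s ^ γ : ℝ)))) s := by
  have inner := ((Real.hasDerivAt_rpow_const (p := γ) (Or.inl hs.ne')).ofReal_comp).const_mul r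
  refine ((hasDerivAt_mittagLeffler_one hγ (r * (s ^ γ : ℝ))).comp s inner).congr_deriv ?_
  have hγ' : (γ : ℂ) ≠ 0 := by exact_mod_cast hγ.ne'
  push_cast
  field_simp

variable {a L : ℝ}

lemma continuous_mittagLeffler_mul_rpow (hγ : 0 < γ) (μ : ℝ) (r : ℂ) :
    Continuous fun s : ℝ => mittagLeffler γ μ (r * (s ^ γ : ℝ)) := by
  have := (differentiable_mittagLeffler hγ μ).continuous
  have := Real.continuous_rpow_const hγ.le
  fun_prop

lemma intervalIntegrable_beta_mul_mittagLeffler (hγ : 0 < γ) (hμ : 0 < μ) (ha : 0 < a) (hL : 0 < L)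
    (r : ℂ) :
    IntervalIntegrable (fun s : ℝ => ((s ^ (μ - 1) * (L - s) ^ (a - 1) : ℝ) : ℂ) *
      mittagLeffler γ μ (r * (s ^ γ : ℝ))) volume 0 L :=
  (intervalIntegrable_ofReal_rpow_mul_sub_rpow hμ ha hL).mul_continuousOn
    (continuous_mittagLeffler_mul_rpow hγ μ r).continuousOn

lemma integral_beta_mul_pow_div_Gamma (hγ : 0 ≤ γ) (hμ : 0 < μ) (ha : 0 < a) (hL : 0 < L)
    (r : ℂ) (k : ℕ) :
    ∫ s in 0..L, ((s ^ (μ - 1) * (L - s) ^ (a - 1) : ℝ) : ℂ) *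
        ((r * (s ^ γ : ℝ)) ^ k / (Real.Gamma (γ * k + μ) : ℂ)) =
      (Real.Gamma a : ℂ) * (L ^ (μ + a - 1) : ℝ) *
        ((r * (L ^ γ : ℝ)) ^ k / (Real.Gamma (γ * k + (μ + a)) : ℂ)) := by
  have harg : 0 < γ * k + μ := by positivity
  have hΓ : (Real.Gamma (γ * k + μ) : ℂ) ≠ 0 := by exact_mod_cast (Real.Gamma_pos_of_pos harg).ne'
  have rpow_mul_pow {x : ℝ} (hx : 0 < x) (b : ℝ) : x ^ (γ * k + b) = x ^ b * (x ^ γ) ^ k := by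
    rw [Real.rpow_add hx, Real.rpow_mul_natCast hx.le, mul_comm]
  have absorb_power : EqOn
      (fun s : ℝ => ((s ^ (μ - 1) * (L - s) ^ (a - 1) : ℝ) : ℂ) *
        ((r * (s ^ γ : ℝ)) ^ k / (Real.Gamma (γ * k + μ) : ℂ)))
      (fun s : ℝ => r ^ k / (Real.Gamma (γ * k + μ) : ℂ) *
        ((s ^ (γ * k + μ - 1) * (L - s) ^ (a - 1) : ℝ) : ℂ)) (Ioo 0 L) := by
    intro s hs
    simp only [add_sub_assoc, rpow_mul_pow hs.1]
    push_cast
    ring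
  rw [integral_congr_Ioo_of_le hL.le absorb_power, intervalIntegral.integral_const_mul,
    intervalIntegral.integral_ofReal, integral_rpow_mul_sub_rpow harg ha hL,
    show γ * k + μ + a - 1 = γ * k + (μ + a - 1) by ring, rpow_mul_pow hL,
    add_assoc (γ * k) μ a, mul_pow]
  push_cast
  field_simp

lemma integral_beta_mul_mittagLeffler (hγ : 0 < γ) (hμ : 0 < μ) (ha : 0 < a) (hL : 0 < L) (r : ℂ) :
    ∫ s in 0..L, ((s ^ (μ - 1) * (L - s) ^ (a - 1) : ℝ) : ℂ) *
        mittagLeffler γ μ (r * (s ^ γ : ℝ)) =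
      (Real.Gamma a : ℂ) * (L ^ (μ + a - 1) : ℝ) * mittagLeffler γ (μ + a) (r * (L ^ γ : ℝ)) := by
  set kernel : ℝ → ℂ := fun s => ((s ^ (μ - 1) * (L - s) ^ (a - 1) : ℝ) : ℂ)
  have kernel_integrable : IntervalIntegrable kernel volume 0 L :=
    intervalIntegrable_ofReal_rpow_mul_sub_rpow hμ ha hL
  have bound_summable := (summable_pow_div_Gamma hγ μ (‖r‖ * L ^ γ : ℝ)).norm
  have termwise := intervalIntegral.hasSum_integral_of_dominated_convergence (μ := volume)
    (a := 0) (b := L)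
    (F := fun (k : ℕ) (s : ℝ) => kernel s * ((r * (s ^ γ : ℝ)) ^ k / (Real.Gamma (γ * k + μ) : ℂ)))
    (fun k s => ‖kernel s‖ * ‖((‖r‖ * L ^ γ : ℝ) : ℂ) ^ k / (Real.Gamma (γ * k + μ) : ℂ)‖)
    (fun k => by
      have := Real.continuous_rpow_const hγ.le
      exact kernel_integrable.def'.aestronglyMeasurable.mul
        (Continuous.aestronglyMeasurable (by fun_prop)))
    (fun k => .of_forall fun s hs => by
      rw [uIoc_of_le hL.le] at hs
      rw [norm_mul]
      gcongr
      refine norm_pow_div_Gamma_le ?_ γ μ k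
      rw [norm_mul, Complex.norm_real, Real.norm_of_nonneg (Real.rpow_nonneg hs.1.le γ)]
      gcongr
      exacts [hs.1.le, hs.2])
    (.of_forall fun s _ => bound_summable.mul_left _)
    (by simpa only [tsum_mul_left] using kernel_integrable.norm.mul_const _)
    (.of_forall fun s _ => (summable_pow_div_Gamma hγ μ _).hasSum.mul_left _)
  rw [mittagLeffler, ← tsum_mul_left]
  exact termwise.tsum_eq.symm.trans
    (tsum_congr fun k => integral_beta_mul_pow_div_Gamma hγ.le hμ ha hL r k)

end MittagLeffler

section HadamardCaputo

/-- The integrand `τ ↦ log^{-ν}(t/τ) (τ u'(τ)) / τ` of the Hadamard–Caputo derivative at `t`, in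
the form in which it occurs in `hadamardCaputoC`. -/
noncomputable def hadamardCaputoIntegrand (ν t : ℝ) (u : ℝ → ℂ) (τ : ℝ) : ℂ :=
  (((Real.log (t / τ)) ^ (-ν) : ℝ) : ℂ) * ((τ : ℂ) * deriv u τ) / (τ : ℂ)

/-- `HasHadamardCaputoAt ν t0 u u' t` says that the Hadamard–Caputo derivative of order `ν` with
base point `t0` of `u` exists at `t` and equals `u'`. Existence means that neither `deriv` nor the
integral in `hadamardCaputoC` takes a junk value, which is what makes the derivative additive. -/
structure HasHadamardCaputoAt (ν t0 : ℝ) (u : ℝ → ℂ) (u' : ℂ) (t : ℝ) : Prop where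
  differentiableAt : ∀ τ ∈ uIoo t0 t, DifferentiableAt ℝ u τ
  intervalIntegrable : IntervalIntegrable (hadamardCaputoIntegrand ν t u) volume t0 t
  hadamardCaputoC_eq : hadamardCaputoC ν t0 u t = u'

variable {ν t0 t τ : ℝ} {u v : ℝ → ℂ} {u' v' : ℂ}

lemma hadamardCaputoC_eq_integral (ν t0 : ℝ) (u : ℝ → ℂ) (t : ℝ) :
    hadamardCaputoC ν t0 u t =
      1 / (Real.Gamma (1 - ν) : ℂ) * ∫ τ in t0..t, hadamardCaputoIntegrand ν t u τ :=
  rfl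

lemma hadamardCaputoC_congr (h : EqOn u v (uIoo t0 t)) :
    hadamardCaputoC ν t0 u t = hadamardCaputoC ν t0 v t := by
  have integrand_eq :
      EqOn (hadamardCaputoIntegrand ν t u) (hadamardCaputoIntegrand ν t v) (uIoo t0 t) := by
    intro τ hτ
    rw [hadamardCaputoIntegrand, hadamardCaputoIntegrand,
      (h.eventuallyEq_of_mem (isOpen_Ioo.mem_nhds hτ)).deriv_eq]
  rw [hadamardCaputoC_eq_integral, hadamardCaputoC_eq_integral, integral_congr_uIoo integrand_eq]

namespace HasHadamardCaputoAt

lemma add (hu : HasHadamardCaputoAt ν t0 u u' t) (hv : HasHadamardCaputoAt ν t0 v v' t) :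
    HasHadamardCaputoAt ν t0 (fun τ => u τ + v τ) (u' + v') t := by
  have integrand_add :
      EqOn (fun τ => hadamardCaputoIntegrand ν t u τ + hadamardCaputoIntegrand ν t v τ)
        (hadamardCaputoIntegrand ν t fun τ => u τ + v τ) (uIoo t0 t) := by
    intro τ hτ
    simp only [hadamardCaputoIntegrand,
      deriv_fun_add (hu.differentiableAt τ hτ) (hv.differentiableAt τ hτ)]
    ring
  refine ⟨fun τ hτ => (hu.differentiableAt τ hτ).add (hv.differentiableAt τ hτ),
    (hu.intervalIntegrable.add hv.intervalIntegrable).congr_uIoo integrand_add, ?_⟩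
  rw [← hu.hadamardCaputoC_eq, ← hv.hadamardCaputoC_eq, hadamardCaputoC_eq_integral,
    ← integral_congr_uIoo integrand_add,
    intervalIntegral.integral_add hu.intervalIntegrable hv.intervalIntegrable, mul_add,
    hadamardCaputoC_eq_integral, hadamardCaputoC_eq_integral]

lemma const_mul (A : ℂ) (hu : HasHadamardCaputoAt ν t0 u u' t) :
    HasHadamardCaputoAt ν t0 (fun τ => A * u τ) (A * u') t := by
  have integrand_const_mul : (hadamardCaputoIntegrand ν t fun τ => A * u τ) =
      fun τ => A * hadamardCaputoIntegrand ν t u τ := by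
    funext τ
    rw [hadamardCaputoIntegrand, hadamardCaputoIntegrand, deriv_const_mul_field]
    ring
  refine ⟨fun τ hτ => (hu.differentiableAt τ hτ).const_mul A, ?_, ?_⟩
  · rw [integrand_const_mul]
    exact hu.intervalIntegrable.const_mul A
  · rw [← hu.hadamardCaputoC_eq, hadamardCaputoC_eq_integral, integrand_const_mul,
      intervalIntegral.integral_const_mul, mul_left_comm, hadamardCaputoC_eq_integral]

end HasHadamardCaputoAt

lemma hasDerivAt_log_div (ht0 : t0 ≠ 0) (hτ : τ ≠ 0) :
    HasDerivAt (fun τ => Real.log (τ / t0)) τ⁻¹ τ := by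
  refine (((hasDerivAt_id τ).div_const t0).log (div_ne_zero hτ ht0)).congr_deriv ?_
  simp only [id]
  field_simp

lemma log_div_mem_Ioo (ht0 : 0 < t0) (hτ : τ ∈ Ioo t0 t) :
    Real.log (τ / t0) ∈ Ioo 0 (Real.log (t / t0)) :=
  ⟨Real.log_pos ((one_lt_div ht0).2 hτ.1),
    Real.log_lt_log (div_pos (ht0.trans hτ.1) ht0) (div_lt_div_of_pos_right hτ.2 ht0)⟩

lemma hadamardCaputoIntegrand_comp_log {V : ℝ → ℂ} {V' : ℂ} (ht0 : t0 ≠ 0) (ht : t ≠ 0)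
    (hτ : τ ≠ 0) (hV : HasDerivAt V V' (Real.log (τ / t0))) :
    hadamardCaputoIntegrand ν t (fun τ => V (Real.log (τ / t0))) τ =
      τ⁻¹ • ((((Real.log (t / t0) - Real.log (τ / t0)) ^ (-ν) : ℝ) : ℂ) * V') := by
  have log_sub : Real.log (t / t0) - Real.log (τ / t0) = Real.log (t / τ) := by
    rw [← Real.log_div (div_ne_zero ht ht0) (div_ne_zero hτ ht0), div_div_div_cancel_right₀ ht0]
  have deriv_eq : deriv (fun τ => V (Real.log (τ / t0))) τ = τ⁻¹ • V' :=
    (hV.scomp τ (hasDerivAt_log_div ht0 hτ)).deriv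
  have hτ' : (τ : ℂ) ≠ 0 := by exact_mod_cast hτ
  rw [hadamardCaputoIntegrand, deriv_eq, log_sub, Complex.real_smul, Complex.real_smul]
  field_simp

lemma hasHadamardCaputoAt_comp_log {V V' : ℝ → ℂ} (ht0 : 0 < t0) (ht : t0 < t)
    (hV : ∀ s ∈ Ioo 0 (Real.log (t / t0)), HasDerivAt V (V' s) s)
    (hV' : IntervalIntegrable (fun s => (((Real.log (t / t0) - s) ^ (-ν) : ℝ) : ℂ) * V' s)
      volume 0 (Real.log (t / t0))) :
    HasHadamardCaputoAt ν t0 (fun τ => V (Real.log (τ / t0)))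
      (1 / (Real.Gamma (1 - ν) : ℂ) * ∫ s in 0..Real.log (t / t0),
        (((Real.log (t / t0) - s) ^ (-ν) : ℝ) : ℂ) * V' s) t := by
  have pos_of_mem {τ : ℝ} (hτ : τ ∈ uIcc t0 t) : 0 < τ :=
    ht0.trans_le (uIcc_of_le ht.le ▸ hτ).1
  have hlog {τ : ℝ} (hτ : τ ∈ uIcc t0 t) : HasDerivAt (fun τ => Real.log (τ / t0)) τ⁻¹ τ :=
    hasDerivAt_log_div ht0.ne' (pos_of_mem hτ).ne'
  have hlog_cont : ContinuousOn (fun τ => Real.log (τ / t0)) (uIcc t0 t) :=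
    fun τ hτ => (hlog hτ).continuousAt.continuousWithinAt
  have hlog_deriv (τ : ℝ) (hτ : τ ∈ uIoo t0 t) :
      HasDerivAt (fun τ => Real.log (τ / t0)) τ⁻¹ τ := hlog (uIoo_subset_uIcc_self hτ)
  have deriv_nonneg (τ : ℝ) (hτ : τ ∈ uIoo t0 t) : 0 ≤ τ⁻¹ :=
    inv_nonneg.2 (pos_of_mem (uIoo_subset_uIcc_self hτ)).le
  have log_base : Real.log (t0 / t0) = 0 := by rw [div_self ht0.ne', Real.log_one]
  have hV_log (τ : ℝ) (hτ : τ ∈ uIoo t0 t) :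
      HasDerivAt V (V' (Real.log (τ / t0))) (Real.log (τ / t0)) :=
    hV _ (log_div_mem_Ioo ht0 (uIoo_of_le ht.le ▸ hτ))
  have integrand_eq : EqOn
      (fun τ => τ⁻¹ • ((fun s => (((Real.log (t / t0) - s) ^ (-ν) : ℝ) : ℂ) * V' s) ∘
        fun τ => Real.log (τ / t0)) τ)
      (hadamardCaputoIntegrand ν t fun τ => V (Real.log (τ / t0))) (uIoo t0 t) := fun τ hτ =>
    (hadamardCaputoIntegrand_comp_log ht0.ne' (ht0.trans ht).ne'
      (pos_of_mem (uIoo_subset_uIcc_self hτ)).ne' (hV_log τ hτ)).symm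
  refine ⟨fun τ hτ => ((hV_log τ hτ).scomp τ (hlog_deriv τ hτ)).differentiableAt, ?_, ?_⟩
  · refine IntervalIntegrable.congr_uIoo ?_ integrand_eq
    rwa [integrable_deriv_smul_comp_iff_of_deriv_nonneg hlog_cont hlog_deriv deriv_nonneg, log_base]
  · rw [hadamardCaputoC_eq_integral, ← integral_congr_uIoo integrand_eq,
      integral_deriv_smul_comp_of_deriv_nonneg hlog_cont hlog_deriv deriv_nonneg, log_base]

lemma hasHadamardCaputoAt_mittagLeffler (hν₀ : 0 < ν) (hν₁ : ν < 1) (ht0 : 0 < t0) (ht : t0 < t)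
    (r : ℂ) :
    HasHadamardCaputoAt ν t0 (fun τ => mittagLeffler ν 1 (r * (Real.log (τ / t0) ^ ν : ℝ)))
      (r * mittagLeffler ν 1 (r * (Real.log (t / t0) ^ ν : ℝ))) t := by
  set L := Real.log (t / t0) with L_def
  have hL : 0 < L := Real.log_pos ((one_lt_div ht0).2 ht)
  have hν' : 0 < 1 - ν := sub_pos.2 hν₁
  have integrand_eq (s : ℝ) : (((L - s) ^ (-ν) : ℝ) : ℂ) *
        (r * ((s ^ (ν - 1) : ℝ) * mittagLeffler ν ν (r * (s ^ ν : ℝ)))) =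
      r * (((s ^ (ν - 1) * (L - s) ^ (1 - ν - 1) : ℝ) : ℂ) *
        mittagLeffler ν ν (r * (s ^ ν : ℝ))) := by
    rw [show 1 - ν - 1 = -ν by ring]
    push_cast
    ring
  have key := hasHadamardCaputoAt_comp_log (ν := ν) ht0 ht
    (fun s hs => hasDerivAt_mittagLeffler_one_mul_rpow hν₀ r hs.1) (by
      simpa only [← L_def, integrand_eq] using
        (intervalIntegrable_beta_mul_mittagLeffler hν₀ hν₀ hν' hL r).const_mul r)
  have hΓ : (Real.Gamma (1 - ν) : ℂ) ≠ 0 := by exact_mod_cast (Real.Gamma_pos_of_pos hν').ne'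
  simp only [← L_def, integrand_eq, intervalIntegral.integral_const_mul,
    integral_beta_mul_mittagLeffler hν₀ hν₀ hν' hL, add_sub_cancel, sub_self, Real.rpow_zero] at key
  convert key using 1
  push_cast
  field_simp

lemma hadamardCaputoC_mittagLeffler_add (hν₀ : 0 < ν) (hν₁ : ν < 1) (ht0 : 0 < t0) (ht : t0 < t)
    (A₁ A₂ r₁ r₂ : ℂ) :
    hadamardCaputoC ν t0 (fun τ =>
        A₁ * mittagLeffler ν 1 (r₁ * (Real.log (τ / t0) ^ ν : ℝ)) +
          A₂ * mittagLeffler ν 1 (r₂ * (Real.log (τ / t0) ^ ν : ℝ))) t =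
      A₁ * r₁ * mittagLeffler ν 1 (r₁ * (Real.log (t / t0) ^ ν : ℝ)) +
        A₂ * r₂ * mittagLeffler ν 1 (r₂ * (Real.log (t / t0) ^ ν : ℝ)) := by
  rw [mul_assoc, mul_assoc]
  exact (((hasHadamardCaputoAt_mittagLeffler hν₀ hν₁ ht0 ht r₁).const_mul A₁).add
    ((hasHadamardCaputoAt_mittagLeffler hν₀ hν₁ ht0 ht r₂).const_mul A₂)).hadamardCaputoC_eq

end HadamardCaputo

theorem hadamard_riesz_fractional_telegraph_fourier_general {ν t0 : ℝ} (hν : ν ∈ Ioo (0 : ℝ) 1)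
    (ht0 : 0 < t0) {lam q r₁ r₂ : ℂ} (hr₁ : r₁ ^ 2 + 2 * lam * r₁ = -q)
    (hr₂ : r₂ ^ 2 + 2 * lam * r₂ = -q) (A₁ A₂ : ℂ) {u : ℝ → ℂ}
    (hu : u = fun t =>
      A₁ * mittagLeffler ν 1 (r₁ * (((Real.log (t / t0)) ^ ν : ℝ) : ℂ)) +
        A₂ * mittagLeffler ν 1 (r₂ * (((Real.log (t / t0)) ^ ν : ℝ) : ℂ))) :
    u t0 = A₁ + A₂ ∧
      ∀ t, t0 < t →
        hadamardCaputoC ν t0 (fun τ => hadamardCaputoC ν t0 u τ) t +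
            2 * lam * hadamardCaputoC ν t0 u t
          = -q * u t := by
  subst hu
  have deriv_eq (B₁ B₂ : ℂ) {t : ℝ} (ht : t0 < t) :=
    hadamardCaputoC_mittagLeffler_add hν.1 hν.2 ht0 ht B₁ B₂ r₁ r₂
  refine ⟨by simp [div_self ht0.ne', Real.zero_rpow hν.1.ne', mittagLeffler_one_zero],
    fun t ht => ?_⟩
  rw [hadamardCaputoC_congr fun τ hτ => deriv_eq A₁ A₂ (uIoo_of_le ht.le ▸ hτ).1,
    deriv_eq (A₁ * r₁) (A₂ * r₂) ht, deriv_eq A₁ A₂ ht]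
  linear_combination
    A₁ * mittagLeffler ν 1 (r₁ * (Real.log (t / t0) ^ ν : ℝ)) * hr₁ +
      A₂ * mittagLeffler ν 1 (r₂ * (Real.log (t / t0) ^ ν : ℝ)) * hr₂

/-- **Proposition 3.2, Fourier-space form.** With
`w = √(λ² - c²|β|^α)`, `r₁ = -λ + w`, `r₂ = -λ - w`, the function
`u*(t) = ½(1+λ/w) E_{ν,1}(r₁ log^ν(t/t0)) + ½(1-λ/w) E_{ν,1}(r₂ log^ν(t/t0))`
satisfies `u*(t0) = 1` and the space-time fractional telegraph equation (in
Fourier space) `D^ν D^ν u* + 2λ D^ν u* = -c²|β|^α u*` for `t > t0`, where `D^ν`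
is the Caputo-type Hadamard derivative with base point `t0`. -/
theorem hadamard_riesz_fractional_telegraph_fourier
    (ν α lam c t0 β : ℝ) (hν : ν ∈ Set.Ioc (0 : ℝ) (1 / 2)) (hα : α ∈ Set.Ioc (0 : ℝ) 2)
    (hlam : 0 < lam) (hc : 0 < c) (ht0 : 0 < t0)
    (hne : lam ^ 2 ≠ c ^ 2 * |β| ^ α)
    (w r₁ r₂ : ℂ)
    (hw : w = ((lam ^ 2 - c ^ 2 * |β| ^ α : ℝ) : ℂ) ^ (1 / 2 : ℂ))
    (hr₁ : r₁ = -(lam : ℂ) + w) (hr₂ : r₂ = -(lam : ℂ) - w)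
    (u : ℝ → ℂ)
    (hu : u = fun t =>
      (1 / 2 : ℂ) * (1 + (lam : ℂ) / w) *
          mittagLeffler ν 1 (r₁ * (((Real.log (t / t0)) ^ ν : ℝ) : ℂ)) +
        (1 / 2 : ℂ) * (1 - (lam : ℂ) / w) *
          mittagLeffler ν 1 (r₂ * (((Real.log (t / t0)) ^ ν : ℝ) : ℂ))) :
    u t0 = 1 ∧
      ∀ t, t0 < t →
        hadamardCaputoC ν t0 (fun τ => hadamardCaputoC ν t0 u τ) t +
            2 * (lam : ℂ) * hadamardCaputoC ν t0 u t
          = -((c ^ 2 * |β| ^ α : ℝ) : ℂ) * u t := by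
  have hw_sq : w ^ 2 = (lam : ℂ) ^ 2 - ((c ^ 2 * |β| ^ α : ℝ) : ℂ) := by
    rw [hw, one_div, Complex.cpow_ofNat_inv_pow, Complex.ofReal_sub, Complex.ofReal_pow]
  have solution := hadamard_riesz_fractional_telegraph_fourier_general
    (q := ((c ^ 2 * |β| ^ α : ℝ) : ℂ)) ⟨hν.1, hν.2.trans_lt one_half_lt_one⟩ ht0
    (by rw [hr₁]; linear_combination hw_sq) (by rw [hr₂]; linear_combination hw_sq) _ _ hu
  exact ⟨solution.1.trans (by ring), solution.2⟩
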